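/- arXiv:1501.05425 — 6 statements merged into one kernel-verified Lean document; each statement's English description precedes it below -/
import Mathlib

section
/- There exists exactly one stream x : Stream' ℕ satisfying x = SCons 0 ((SCons 1 x) ⊕ x), where ⊕ is pointwise addition of streams; moreover this unique stream is the stream of Fibonacci numbers: x.get n = Nat.fib n for all n. -/
open Stream'

/-- Pointwise addition of streams. -/
def sadd (xs ys : Stream' ℕ) : Stream' ℕ := fun n => xs.get n + ys.get n

infixl:65 " ⊕ " => sadd

theorem get_sadd (xs ys : Stream' ℕ) (n : ℕ) : (xs ⊕ ys).get n = xs.get n + ys.get n :=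
  rfl

section FibRecurrence

variable {M : Type*} [AddCommMonoid M]

theorem fib_add_two_nsmul (n : ℕ) (a : M) :
    Nat.fib (n + 2) • a = Nat.fib n • a + Nat.fib (n + 1) • a := by
  rw [Nat.fib_add_two, add_nsmul]

theorem fib_recurrence_iff_eq_fib_nsmul {f : ℕ → M} {a b : M} :
    (f 0 = a ∧ f 1 = b + a ∧ ∀ n, f (n + 2) = f n + f (n + 1)) ↔
      ∀ n, f n = Nat.fib (n + 1) • a + Nat.fib n • b := by
  have closed_form_add_two (n : ℕ) :
      Nat.fib (n + 3) • a + Nat.fib (n + 2) • b =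
        (Nat.fib (n + 1) • a + Nat.fib n • b) +
          (Nat.fib (n + 2) • a + Nat.fib (n + 1) • b) := by
    rw [fib_add_two_nsmul (n + 1) a, fib_add_two_nsmul n b, add_add_add_comm]
  constructor
  · rintro ⟨h_zero, h_one, h_add_two⟩ n
    induction n using Nat.twoStepInduction with
    | zero => simp [h_zero]
    | one => simp [h_one, add_comm]
    | more n ih ih_succ => rw [h_add_two, ih, ih_succ, closed_form_add_two]
  · intro h
    refine ⟨by simp [h], by simp [h, add_comm], fun n => ?_⟩
    rw [h, h, h, closed_form_add_two]

end FibRecurrence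

section CorecursiveEquation

variable {a b : ℕ} {x : Stream' ℕ}

theorem eq_cons_sadd_iff_fib_recurrence :
    x = cons a (cons b x ⊕ x) ↔
      x.get 0 = a ∧ x.get 1 = b + a ∧ ∀ n, x.get (n + 2) = x.get n + x.get (n + 1) := by
  constructor
  · intro hx
    have h_zero : x.get 0 = a := congrArg (get · 0) hx
    have h_succ (n : ℕ) : x.get (n + 1) = (cons b x).get n + x.get n :=
      congrArg (get · (n + 1)) hx
    exact ⟨h_zero, h_zero ▸ h_succ 0, fun n => h_succ (n + 1)⟩
  · rintro ⟨h_zero, h_one, h_add_two⟩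
    refine Stream'.ext fun n => ?_
    match n with
    | 0 => exact h_zero
    | 1 => rw [h_one, get_succ_cons, get_sadd, get_zero_cons, h_zero]
    | n + 2 => rw [h_add_two, get_succ_cons, get_sadd, get_succ_cons]

theorem eq_cons_sadd_iff_get_eq_fib :
    x = cons a (cons b x ⊕ x) ↔ ∀ n, x.get n = Nat.fib (n + 1) * a + Nat.fib n * b :=
  eq_cons_sadd_iff_fib_recurrence.trans fib_recurrence_iff_eq_fib_nsmul

end CorecursiveEquation

theorem stmt_4 :
    (∃! x : Stream' ℕ, x = Stream'.cons 0 ((Stream'.cons 1 x) ⊕ x)) ∧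
    (∀ x : Stream' ℕ, x = Stream'.cons 0 ((Stream'.cons 1 x) ⊕ x) →
      ∀ n, x.get n = Nat.fib n) := by
  have solution_iff (x : Stream' ℕ) :
      x = cons 0 (cons 1 x ⊕ x) ↔ ∀ n, x.get n = Nat.fib n := by
    simpa only [mul_zero, zero_add, mul_one] using
      eq_cons_sadd_iff_get_eq_fib (a := 0) (b := 1) (x := x)
  have existence : (Nat.fib : Stream' ℕ) = cons 0 (cons 1 Nat.fib ⊕ Nat.fib) :=
    (solution_iff Nat.fib).2 fun _ => rfl
  exact ⟨⟨Nat.fib, existence, fun y hy => Stream'.ext ((solution_iff y).1 hy)⟩,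
    fun x => (solution_iff x).1⟩
end

section
/- There exists exactly one function f : Finset (Stream' ℕ) → Stream' ℕ satisfying f X = SCons (X.sup head) (f (X.image tail)) for all finite sets X of streams; moreover this unique function computes the pointwise supremum: (f X).get n = X.sup (fun s => s.get n) for all X and n (where the supremum over the empty set is 0). -/
open Stream'
open scoped Classical

/-!
A function into streams is determined by the heads and the successor states of its values, because
streams form a final coalgebra. The pointwise supremum solves the recursion since taking suprema
commutes with `tail`, so it is the only solution.
-/

theorem eq_of_forall_eq_cons {σ α : Type*} {hd : σ → α} {next : σ → σ} {f g : σ → Stream' α}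
    (hf : ∀ x, f x = cons (hd x) (f (next x))) (hg : ∀ x, g x = cons (hd x) (g (next x))) :
    f = g := by
  funext x
  apply Stream'.ext
  intro n
  induction n generalizing x with
  | zero => rw [hf, hg, get_zero_cons, get_zero_cons]
  | succ n ih => rw [hf, hg, get_succ_cons, get_succ_cons, ih]

section PointwiseSup

variable {α : Type*} [SemilatticeSup α] [OrderBot α]

/-- The pointwise supremum of a finite set of streams, the explicit solution of the recursion; the
empty set gives the constant stream `⊥`. -/
def pointwiseSup (X : Finset (Stream' α)) : Stream' α := fun n => X.sup fun s => s.get n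

theorem get_pointwiseSup (X : Finset (Stream' α)) (n : ℕ) :
    (pointwiseSup X).get n = X.sup fun s => s.get n :=
  rfl

variable [DecidableEq (Stream' α)]

theorem tail_pointwiseSup (X : Finset (Stream' α)) :
    (pointwiseSup X).tail = pointwiseSup (X.image tail) := by
  apply Stream'.ext
  intro n
  simp only [get_tail, get_pointwiseSup, Finset.sup_image, Function.comp_def]

theorem pointwiseSup_eq_cons (X : Finset (Stream' α)) :
    pointwiseSup X = cons (X.sup head) (pointwiseSup (X.image tail)) := by
  rw [← tail_pointwiseSup]
  exact (Stream'.eta (pointwiseSup X)).symm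

theorem stmt_6_general :
    (∃! f : Finset (Stream' α) → Stream' α, ∀ X, f X = cons (X.sup head) (f (X.image tail))) ∧
    (∀ f : Finset (Stream' α) → Stream' α, (∀ X, f X = cons (X.sup head) (f (X.image tail))) →
      ∀ X n, (f X).get n = X.sup fun s => s.get n) := by
  have eq_pointwiseSup (f : Finset (Stream' α) → Stream' α)
      (hf : ∀ X, f X = cons (X.sup head) (f (X.image tail))) : f = pointwiseSup :=
    eq_of_forall_eq_cons hf pointwiseSup_eq_cons
  refine ⟨⟨pointwiseSup, pointwiseSup_eq_cons, eq_pointwiseSup⟩, fun f hf X n => ?_⟩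
  rw [eq_pointwiseSup f hf, get_pointwiseSup]

end PointwiseSup

theorem stmt_6 :
    (∃! f : Finset (Stream' ℕ) → Stream' ℕ,
      ∀ X : Finset (Stream' ℕ),
        f X = Stream'.cons (X.sup Stream'.head) (f (X.image Stream'.tail))) ∧
    (∀ f : Finset (Stream' ℕ) → Stream' ℕ,
      (∀ X : Finset (Stream' ℕ),
        f X = Stream'.cons (X.sup Stream'.head) (f (X.image Stream'.tail))) →
      ∀ X n, (f X).get n = X.sup (fun s => s.get n)) :=
  stmt_6_general
end

section
/- There exists exactly one function f : ℕ → ℕ → ℕ → Stream' ℕ satisfying the mixed recursive–corecursive equation f n a i = (if i = 0 then SCons a (f (n + 1) 1 (n + 1)) else f n (a * i) (i − 1)) for all n, a, i; moreover this unique function satisfies (f 1 1 1).get k = (k + 1)! for all k (it computes the stream of factorials starting at 1). -/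
open Stream'

/-!
Running the inner recursion to its end gives `f n a i = cons (a * i!) (f (n + 1) 1 (n + 1))`.
Hence `s n := f n 1 n` satisfies the purely corecursive equation `s n = cons n! (s (n + 1))`, which
has a unique solution; so `f` is determined by a closed form, and that closed form does solve the
equation.
-/

open scoped Nat

theorem eq_corec_of_eq_cons {α β : Type*} {head : α → β} {next : α → α} {s : α → Stream' β}
    (hs : ∀ x, s x = cons (head x) (s (next x))) : s = corec head next := by
  funext x
  refine Stream'.ext fun k ↦ ?_
  induction k generalizing x with
  | zero => rw [hs, corec_eq, get_zero_cons, get_zero_cons]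
  | succ k ih => rw [hs, corec_eq, get_succ_cons, get_succ_cons, ih]

theorem get_corec {α β : Type*} (head : α → β) (next : α → α) (x : α) (k : ℕ) :
    (corec head next x).get k = head (next^[k] x) := by
  induction k generalizing x with
  | zero => rw [corec_eq, get_zero_cons, Function.iterate_zero_apply]
  | succ k ih => rw [corec_eq, get_succ_cons, ih, Function.iterate_succ_apply]

theorem eq_apply_mul_prod_range_zero {M α : Type*} [CommMonoid M] {c : ℕ → M} {g : M → ℕ → α}
    (hg : ∀ a i, g a (i + 1) = g (a * c i) i) (a : M) (i : ℕ) :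
    g a i = g (a * ∏ j ∈ Finset.range i, c j) 0 := by
  induction i generalizing a with
  | zero => rw [Finset.prod_range_zero, mul_one]
  | succ i ih => rw [hg, ih, Finset.prod_range_succ_comm, mul_assoc]

/-- The mixed equation for `f n a i`: the branch `i ≠ 0` is a recursive call that multiplies the
accumulator `a` by `i`, the branch `i = 0` emits `a` and restarts corecursively at `n + 1`. -/
def FactorialEquation (f : ℕ → ℕ → ℕ → Stream' ℕ) : Prop :=
  ∀ n a i, f n a i = if i = 0 then cons a (f (n + 1) 1 (n + 1)) else f n (a * i) (i - 1)

/-- The stream `n!, (n + 1)!, (n + 2)!, …`. -/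
def factorialsFrom : ℕ → Stream' ℕ :=
  corec Nat.factorial Nat.succ

theorem factorialsFrom_eq_cons (n : ℕ) :
    factorialsFrom n = cons n ! (factorialsFrom (n + 1)) :=
  corec_eq _ _ _

theorem get_factorialsFrom (n k : ℕ) : (factorialsFrom n).get k = (n + k)! := by
  rw [factorialsFrom, get_corec, Nat.succ_iterate]

/-- The closed form of the solution of `FactorialEquation`. -/
def factorialSolution (n a i : ℕ) : Stream' ℕ :=
  cons (a * i !) (factorialsFrom (n + 1))

theorem factorialSolution_one_self (n : ℕ) : factorialSolution n 1 n = factorialsFrom n := by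
  rw [factorialSolution, one_mul, ← factorialsFrom_eq_cons]

theorem factorialEquation_factorialSolution : FactorialEquation factorialSolution := by
  intro n a i
  cases i with
  | zero =>
    rw [if_pos rfl, factorialSolution_one_self, factorialSolution, Nat.factorial_zero, mul_one]
  | succ i =>
    rw [if_neg i.succ_ne_zero, Nat.add_sub_cancel, factorialSolution, factorialSolution,
      Nat.factorial_succ, mul_assoc]

namespace FactorialEquation

variable {f : ℕ → ℕ → ℕ → Stream' ℕ}

theorem eq_cons (hf : FactorialEquation f) (n a i : ℕ) :
    f n a i = cons (a * i !) (f (n + 1) 1 (n + 1)) := by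
  have recursive_branch (a i : ℕ) : f n a (i + 1) = f n (a * (i + 1)) i := hf n a (i + 1)
  have base_branch (a : ℕ) : f n a 0 = cons a (f (n + 1) 1 (n + 1)) := hf n a 0
  rw [eq_apply_mul_prod_range_zero recursive_branch, base_branch,
    Finset.prod_range_add_one_eq_factorial]

theorem diagonal_eq_factorialsFrom (hf : FactorialEquation f) :
    (fun n ↦ f n 1 n) = factorialsFrom :=
  eq_corec_of_eq_cons fun n ↦ by rw [hf.eq_cons, one_mul]

theorem eq_factorialSolution (hf : FactorialEquation f) : f = factorialSolution := by
  funext n a i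
  rw [hf.eq_cons, factorialSolution, ← hf.diagonal_eq_factorialsFrom]

end FactorialEquation

theorem stmt_14 :
    (∃! f : ℕ → ℕ → ℕ → Stream' ℕ,
      ∀ n a i, f n a i =
        if i = 0 then Stream'.cons a (f (n + 1) 1 (n + 1)) else f n (a * i) (i - 1)) ∧
    (∀ f : ℕ → ℕ → ℕ → Stream' ℕ,
      (∀ n a i, f n a i =
        if i = 0 then Stream'.cons a (f (n + 1) 1 (n + 1)) else f n (a * i) (i - 1)) →
      ∀ k, (f 1 1 1).get k = Nat.factorial (k + 1)) := by
  refine ⟨⟨factorialSolution, factorialEquation_factorialSolution,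
    fun _ ↦ FactorialEquation.eq_factorialSolution⟩, fun f hf k ↦ ?_⟩
  rw [FactorialEquation.eq_factorialSolution hf, factorialSolution_one_self, get_factorialsFrom,
    add_comm]
end

section
/- There exists exactly one function f : ℕ → ℕ → Stream' ℕ satisfying the mixed recursive–corecursive equation f m n = (if (m = 0 ∧ n > 1) ∨ Nat.gcd m n = 1 then SCons n (f (m * n) (n + 1)) else f m (n + 1)) for all m, n; moreover f 1 2 is the stream of all prime numbers in increasing order: (f 1 2).get k = Nat.nth Nat.Prime k for all k. -/
open Stream'

/-!
Read the equation as a machine on states `(m, n)` that either emits `n` or silently moves on. From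
every state only finitely many silent moves precede an emission: for `m ≠ 0` because `m * n + 1` is
coprime to `m`, for `m = 0` because every `n > 1` is emitted. Hence the equation has a solution,
obtained by corecursion after skipping the silent moves, and two functions satisfying it on a set
of states closed under the moves are bisimilar there. This gives existence and uniqueness. The
states reachable from `(1, 2)` satisfy the invariant that the prime divisors of `m` are exactly the
primes below `n`; there `n` is emitted iff it is prime, so the increasing enumeration of the primes
from `n` on also satisfies the equation.
-/

/-- The data of a mixed recursive–corecursive stream equation
`F s = if emits s then out s :: F (next s) else F (skip s)` with parameters `s : σ`. -/
structure StreamScheme (σ α : Type*) where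
  emits : σ → Prop
  out : σ → α
  next : σ → σ
  skip : σ → σ

namespace StreamScheme

variable {σ α : Type*} (R : StreamScheme σ α)

/-- `F` satisfies the equation of the scheme at every state of `S`, given as its two branches so
that `emits` need not be decidable. -/
structure IsSolutionOn (S : Set σ) (F : σ → Stream' α) : Prop where
  eq_cons : ∀ s ∈ S, R.emits s → F s = Stream'.cons (R.out s) (F (R.next s))
  eq_skip : ∀ s ∈ S, ¬ R.emits s → F s = F (R.skip s)

/-- No state starts an infinite run of silent moves. -/
def IsProductive : Prop := ∀ s, ∃ j, R.emits (R.skip^[j] s)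

/-- `S` is stable under the moves that the scheme makes from its states. -/
structure IsInvariant (S : Set σ) : Prop where
  next_mem : ∀ s ∈ S, R.emits s → R.next s ∈ S
  skip_mem : ∀ s ∈ S, ¬ R.emits s → R.skip s ∈ S

variable {R}

lemma isSolutionOn_univ_iff_eq_ite [DecidablePred R.emits] {F : σ → Stream' α} :
    R.IsSolutionOn Set.univ F ↔
      ∀ s, F s = if R.emits s then Stream'.cons (R.out s) (F (R.next s)) else F (R.skip s) where
  mp hF s := by
    split_ifs with hs
    · exact hF.eq_cons s trivial hs
    · exact hF.eq_skip s trivial hs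
  mpr hF :=
    { eq_cons := fun s _ hs => (hF s).trans (if_pos hs)
      eq_skip := fun s _ hs => (hF s).trans (if_neg hs) }

lemma IsSolutionOn.mono {S T : Set σ} {F : σ → Stream' α} (hF : R.IsSolutionOn T F)
    (hST : S ⊆ T) : R.IsSolutionOn S F where
  eq_cons s hs := hF.eq_cons s (hST hs)
  eq_skip s hs := hF.eq_skip s (hST hs)

lemma isInvariant_univ : R.IsInvariant Set.univ where
  next_mem _ _ _ := trivial
  skip_mem _ _ _ := trivial

section Uniqueness

variable {S : Set σ} {F G : σ → Stream' α}

lemma IsProductive.exists_emits_eq (hR : R.IsProductive) (hS : R.IsInvariant S)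
    (hF : R.IsSolutionOn S F) (hG : R.IsSolutionOn S G) {s : σ} (hs : s ∈ S) :
    ∃ t ∈ S, R.emits t ∧ F s = F t ∧ G s = G t := by
  obtain ⟨j, hj⟩ := hR s
  induction j generalizing s with
  | zero => exact ⟨s, hs, hj, rfl, rfl⟩
  | succ j ih =>
    by_cases hemits : R.emits s
    · exact ⟨s, hs, hemits, rfl, rfl⟩
    · rw [hF.eq_skip s hs hemits, hG.eq_skip s hs hemits]
      exact ih (hS.skip_mem s hs hemits) hj

theorem IsSolutionOn.eqOn (hF : R.IsSolutionOn S F) (hG : R.IsSolutionOn S G)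
    (hR : R.IsProductive) (hS : R.IsInvariant S) : Set.EqOn F G S := by
  intro s hs
  refine Stream'.eq_of_bisim (fun x y => ∃ s ∈ S, x = F s ∧ y = G s) ?_ ⟨s, hs, rfl, rfl⟩
  rintro _ _ ⟨s, hs, rfl, rfl⟩
  obtain ⟨t, ht, hemits, hFt, hGt⟩ := hR.exists_emits_eq hS hF hG hs
  rw [hFt, hGt, hF.eq_cons t ht hemits, hG.eq_cons t ht hemits]
  exact ⟨rfl, R.next t, hS.next_mem t ht hemits, rfl, rfl⟩

end Uniqueness

section Existence

open Classical in
/-- The first emitting state on the run of silent moves from `s`. -/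
noncomputable def firstEmitting (hR : R.IsProductive) (s : σ) : σ :=
  R.skip^[Nat.find (hR s)] s

lemma firstEmitting_of_emits (hR : R.IsProductive) {s : σ} (hs : R.emits s) :
    firstEmitting hR s = s := by
  classical
  have hfind : Nat.find (hR s) = 0 := (Nat.find_eq_zero _).2 hs
  rw [firstEmitting, hfind, Function.iterate_zero_apply]

lemma firstEmitting_of_not_emits (hR : R.IsProductive) {s : σ} (hs : ¬ R.emits s) :
    firstEmitting hR s = firstEmitting hR (R.skip s) := by
  classical
  have hfind : Nat.find (hR s) = Nat.find (hR (R.skip s)) + 1 :=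
    Nat.find_comp_succ (hR s) (hR (R.skip s)) hs
  rw [firstEmitting, hfind, Function.iterate_succ_apply, firstEmitting]

/-- The solution of a productive scheme: purely corecursive, because each step first runs through
all silent moves. -/
noncomputable def solution (hR : R.IsProductive) : σ → Stream' α :=
  Stream'.corec (fun s => R.out (firstEmitting hR s)) (fun s => R.next (firstEmitting hR s))

lemma solution_eq_cons (hR : R.IsProductive) (s : σ) :
    solution hR s = Stream'.cons (R.out (firstEmitting hR s))
      (solution hR (R.next (firstEmitting hR s))) :=
  Stream'.corec_eq _ _ s

lemma isSolutionOn_solution (hR : R.IsProductive) : R.IsSolutionOn Set.univ (solution hR) where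
  eq_cons s _ hs := by rw [solution_eq_cons, firstEmitting_of_emits hR hs]
  eq_skip s _ hs := by
    rw [solution_eq_cons, firstEmitting_of_not_emits hR hs, ← solution_eq_cons]

end Existence

theorem IsProductive.existsUnique_isSolutionOn_univ (hR : R.IsProductive) :
    ∃! F : σ → Stream' α, R.IsSolutionOn Set.univ F :=
  ⟨solution hR, isSolutionOn_solution hR, fun _ hF =>
    Set.eqOn_univ _ _ |>.1 (hF.eqOn (isSolutionOn_solution hR) hR isInvariant_univ)⟩

end StreamScheme

section NthFrom

/-- The stream of the numbers `≥ n` satisfying `p`, in increasing order. When only finitely many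
numbers satisfy `p` it ends in the junk value `0` of `Nat.nth`. -/
noncomputable def nthFrom (p : ℕ → Prop) [DecidablePred p] (n : ℕ) : Stream' ℕ :=
  fun k => Nat.nth p (Nat.count p n + k)

variable {p : ℕ → Prop} [DecidablePred p] {n : ℕ}

lemma nthFrom_get (k : ℕ) : (nthFrom p n).get k = Nat.nth p (Nat.count p n + k) := rfl

lemma nthFrom_of_pos (hn : p n) : nthFrom p n = Stream'.cons n (nthFrom p (n + 1)) := by
  ext k
  cases k with
  | zero => exact Nat.nth_count hn
  | succ k =>
    rw [Stream'.get_succ_cons, nthFrom_get, nthFrom_get, Nat.count_succ, if_pos hn, Nat.add_assoc,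
      Nat.add_comm 1 k]

lemma nthFrom_of_neg (hn : ¬ p n) : nthFrom p n = nthFrom p (n + 1) := by
  ext k
  rw [nthFrom_get, nthFrom_get, Nat.count_succ, if_neg hn, Nat.add_zero]

end NthFrom

/-- The scheme of the equation for `f m n`, with states `(m, n)`: `n` is the current candidate and,
in a run started with `m = 1`, `m` is the product of the numbers emitted so far. -/
def coprimeSieve : StreamScheme (ℕ × ℕ) ℕ where
  emits s := (s.1 = 0 ∧ s.2 > 1) ∨ Nat.gcd s.1 s.2 = 1
  out s := s.2
  next s := (s.1 * s.2, s.2 + 1)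
  skip s := (s.1, s.2 + 1)

namespace coprimeSieve

instance : DecidablePred coprimeSieve.emits := fun s =>
  inferInstanceAs (Decidable ((s.1 = 0 ∧ s.2 > 1) ∨ Nat.gcd s.1 s.2 = 1))

lemma isSolutionOn_univ_uncurry_iff {f : ℕ → ℕ → Stream' ℕ} :
    coprimeSieve.IsSolutionOn Set.univ (Function.uncurry f) ↔
      ∀ m n, f m n =
        if (m = 0 ∧ n > 1) ∨ Nat.gcd m n = 1
        then Stream'.cons n (f (m * n) (n + 1))
        else f m (n + 1) := by
  rw [StreamScheme.isSolutionOn_univ_iff_eq_ite, Prod.forall]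
  rfl

lemma skip_iterate (m n j : ℕ) : coprimeSieve.skip^[j] (m, n) = (m, n + j) := by
  induction j with
  | zero => rfl
  | succ j ih => rw [Function.iterate_succ_apply', ih]; rfl

lemma isProductive : coprimeSieve.IsProductive := by
  rintro ⟨m, n⟩
  suffices ∃ k ≥ n, coprimeSieve.emits (m, k) by
    obtain ⟨k, hnk, hk⟩ := this
    exact ⟨k - n, by rwa [skip_iterate, Nat.add_sub_cancel' hnk]⟩
  rcases Nat.eq_zero_or_pos m with hm | hm
  · exact ⟨n + 2, by omega, Or.inl ⟨hm, by simp⟩⟩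
  · have hle : n ≤ m * n := Nat.le_mul_of_pos_left n hm
    exact ⟨m * n + 1, by omega, Or.inr (by simp)⟩

end coprimeSieve

/-- The states `(m, n)` with `n ≥ 2` in which the prime divisors of `m` are exactly the primes
below `n`, the invariant of the sieve started at `(1, 2)`. -/
def primeSieveStates : Set (ℕ × ℕ) :=
  {s | 2 ≤ s.2 ∧ ∀ p : ℕ, p.Prime → (p ∣ s.1 ↔ p < s.2)}

namespace primeSieveStates

lemma one_two_mem : (1, 2) ∈ primeSieveStates :=
  ⟨le_rfl, fun _ hp => iff_of_false hp.not_dvd_one hp.two_le.not_gt⟩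

variable {m n : ℕ}

lemma ne_zero (h : (m, n) ∈ primeSieveStates) : m ≠ 0 := by
  rintro rfl
  obtain ⟨p, hnp, hp⟩ := Nat.exists_infinite_primes n
  exact hnp.not_gt ((h.2 p hp).1 (dvd_zero p))

lemma coprime_iff_prime (h : (m, n) ∈ primeSieveStates) : m.Coprime n ↔ n.Prime := by
  obtain ⟨hn, hdvd⟩ := h
  constructor
  · intro hmn
    by_contra hprime
    have hminFac : n.minFac.Prime := Nat.minFac_prime (by omega)
    have hlt : n.minFac < n := (Nat.not_prime_iff_minFac_lt hn).1 hprime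
    exact Nat.not_coprime_of_dvd_of_dvd hminFac.one_lt ((hdvd _ hminFac).2 hlt)
      n.minFac_dvd hmn
  · intro hprime
    exact (hprime.coprime_iff_not_dvd.2 fun hnm => lt_irrefl n ((hdvd n hprime).1 hnm)).symm

lemma emits_iff_prime (h : (m, n) ∈ primeSieveStates) :
    coprimeSieve.emits (m, n) ↔ n.Prime :=
  (or_iff_right fun hzero => ne_zero h hzero.1).trans (coprime_iff_prime h)

lemma mul_succ_mem (h : (m, n) ∈ primeSieveStates) (hn : n.Prime) :
    (m * n, n + 1) ∈ primeSieveStates := by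
  refine ⟨Nat.le_succ_of_le h.1, fun p hp => ?_⟩
  rw [hp.dvd_mul, h.2 p hp, Nat.prime_dvd_prime_iff_eq hp hn, Nat.lt_succ_iff_lt_or_eq]

lemma succ_mem (h : (m, n) ∈ primeSieveStates) (hn : ¬ n.Prime) :
    (m, n + 1) ∈ primeSieveStates := by
  refine ⟨Nat.le_succ_of_le h.1, fun p hp => ?_⟩
  have hne : p ≠ n := fun hpn => hn (hpn ▸ hp)
  rw [h.2 p hp, Nat.lt_succ_iff_lt_or_eq, or_iff_left hne]

lemma isInvariant : coprimeSieve.IsInvariant primeSieveStates where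
  next_mem _ hs hemits := mul_succ_mem hs ((emits_iff_prime hs).1 hemits)
  skip_mem _ hs hemits := succ_mem hs (mt (emits_iff_prime hs).2 hemits)

lemma isSolutionOn_nthFrom_prime :
    coprimeSieve.IsSolutionOn primeSieveStates (fun s => nthFrom Nat.Prime s.2) where
  eq_cons _ hs hemits := nthFrom_of_pos ((emits_iff_prime hs).1 hemits)
  eq_skip _ hs hemits := nthFrom_of_neg (mt (emits_iff_prime hs).2 hemits)

end primeSieveStates

theorem coprimeSieve.eq_nthFrom_prime {F : ℕ × ℕ → Stream' ℕ}
    (hF : coprimeSieve.IsSolutionOn primeSieveStates F) {s : ℕ × ℕ}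
    (hs : s ∈ primeSieveStates) : F s = nthFrom Nat.Prime s.2 :=
  hF.eqOn primeSieveStates.isSolutionOn_nthFrom_prime coprimeSieve.isProductive
    primeSieveStates.isInvariant hs

lemma nthFrom_prime_two_get (k : ℕ) : (nthFrom Nat.Prime 2).get k = Nat.nth Nat.Prime k := by
  have hcount : Nat.count Nat.Prime 2 = 0 := by decide
  rw [nthFrom_get, hcount, Nat.zero_add]

theorem stmt_15 :
    (∃! f : ℕ → ℕ → Stream' ℕ,
      ∀ m n, f m n =
        if (m = 0 ∧ n > 1) ∨ Nat.gcd m n = 1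
        then Stream'.cons n (f (m * n) (n + 1))
        else f m (n + 1)) ∧
    (∀ f : ℕ → ℕ → Stream' ℕ,
      (∀ m n, f m n =
        if (m = 0 ∧ n > 1) ∨ Nat.gcd m n = 1
        then Stream'.cons n (f (m * n) (n + 1))
        else f m (n + 1)) →
      ∀ k, (f 1 2).get k = Nat.nth Nat.Prime k) := by
  simp only [← coprimeSieve.isSolutionOn_univ_uncurry_iff]
  constructor
  · exact (Equiv.curry ℕ ℕ (Stream' ℕ)).existsUnique_congr_right.1
      coprimeSieve.isProductive.existsUnique_isSolutionOn_univ
  · intro f hf k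
    have hprimes : f 1 2 = nthFrom Nat.Prime 2 :=
      coprimeSieve.eq_nthFrom_prime (hf.mono (Set.subset_univ _)) primeSieveStates.one_two_mem
    rw [hprimes, nthFrom_prime_two_get]
end

section
/- There is no function f : ℕ → Stream' ℕ satisfying the equation f n = (if n < 2 then SCons n (f (n + 1)) else Stream'.map (fun x => x + 1) (tail (f (n − 1)))) for all n. -/
open Stream'

theorem stream_map_ne_self {α : Type*} {g : α → α} (hg : ∀ a, g a ≠ a) (s : Stream' α) :
    Stream'.map g s ≠ s := fun h =>
  hg s.head ((Stream'.head_map g s).symm.trans (congrArg Stream'.head h))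

theorem stmt_17_general {α : Type*} {g : α → α} (hg : ∀ a, g a ≠ a) (c : ℕ → α) {k : ℕ}
    (hk : 0 < k) :
    ¬ ∃ f : ℕ → Stream' α,
      ∀ n, f n =
        if n < k then Stream'.cons (c n) (f (n + 1))
        else Stream'.map g (Stream'.tail (f (n - 1))) := by
  rintro ⟨f, hf⟩
  have tail_pred : Stream'.tail (f (k - 1)) = f k := by
    rw [hf (k - 1), if_pos (Nat.sub_one_lt_of_lt hk), Stream'.tail_cons, Nat.sub_add_cancel hk]
  have eq_map : f k = Stream'.map g (f k) := by
    simpa only [lt_irrefl, if_false, tail_pred] using hf k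
  exact stream_map_ne_self hg (f k) eq_map.symm

theorem stmt_17 :
    ¬ ∃ f : ℕ → Stream' ℕ,
      ∀ n, f n =
        if n < 2 then Stream'.cons n (f (n + 1))
        else Stream'.map (fun x => x + 1) (Stream'.tail (f (n - 1))) :=
  stmt_17_general Nat.succ_ne_self id two_pos
end

section
/- There exists exactly one function f : (ℕ → Bool) → Stream'.Seq ℕ → Stream'.Seq ℕ such that for every predicate p and every possibly infinite sequence s: (i) if no element of s satisfies p (i.e., ∀ a ∈ s, p a = false) then f p s = Seq.nil, and (ii) for all a and s', if s = Seq.cons a s' then f p s = Seq.cons a (f p s') when p a = true, and f p s = f p s' when p a = false. (This is the filter function on lazy lists.) -/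
open Stream'

/-!
Call `(a, t)` the first match of `p` in `s` if `s` consists of finitely many elements failing `p`,
then `a` satisfying `p`, then `t`. A first match is unique, and it exists as soon as some element
of `s` satisfies `p`, because every element of a lazy list occurs at a finite position. Unfolding
`s` along first matches corecursively gives a filter. Conversely the equations force any filter to
send `s` to `nil` if there is no first match, and to `cons a` of the filtered `t` otherwise, so the
outputs of two filters are bisimilar.
-/

universe u v

theorem corec_eq_of_step_eq {α : Type u} {β : Type v} {f : β → Option (α × β)} {b c : β}
    (h : f b = f c) : Seq.corec f b = Seq.corec f c := by
  cases hc : f c with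
  | none => rw [Seq.corec_nil _ _ hc, Seq.corec_nil _ _ (h.trans hc)]
  | some r => rw [Seq.corec_cons hc, Seq.corec_cons (h.trans hc)]

section

variable {α : Type u} {p : α → Bool} {s : Seq α} {a : α} {r r' : α × Seq α}

/-- `FirstMatch p s (a, t)` says that `a` is the first element of `s` satisfying `p` and that `t` is
the part of `s` after it. The predicate is inductive, so only finitely many elements are skipped. -/
inductive FirstMatch (p : α → Bool) : Seq α → α × Seq α → Prop
  | head {a : α} {s : Seq α} (ha : p a = true) : FirstMatch p (Seq.cons a s) (a, s)
  | tail {a : α} {s : Seq α} {r : α × Seq α} (ha : p a = false) (h : FirstMatch p s r) :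
      FirstMatch p (Seq.cons a s) r

theorem firstMatch_cons_of_true (ha : p a = true) :
    FirstMatch p (Seq.cons a s) r ↔ r = (a, s) := by
  refine ⟨fun h => ?_, fun h => h ▸ .head ha⟩
  generalize hu : Seq.cons a s = u at h
  cases h with
  | head _ =>
    obtain ⟨rfl, rfl⟩ := Seq.cons_eq_cons.1 hu
    rfl
  | tail hb _ =>
    obtain ⟨rfl, rfl⟩ := Seq.cons_eq_cons.1 hu
    simp [ha] at hb

theorem firstMatch_cons_of_false (ha : p a = false) :
    FirstMatch p (Seq.cons a s) r ↔ FirstMatch p s r := by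
  refine ⟨fun h => ?_, .tail ha⟩
  generalize hu : Seq.cons a s = u at h
  cases h with
  | head hb =>
    obtain ⟨rfl, rfl⟩ := Seq.cons_eq_cons.1 hu
    simp [ha] at hb
  | tail _ h =>
    obtain ⟨rfl, rfl⟩ := Seq.cons_eq_cons.1 hu
    exact h

theorem FirstMatch.unique (h : FirstMatch p s r) (h' : FirstMatch p s r') : r = r' := by
  induction h with
  | head ha => exact ((firstMatch_cons_of_true ha).1 h').symm
  | tail ha _ ih => exact ih ((firstMatch_cons_of_false ha).1 h')

theorem FirstMatch.exists_mem (h : FirstMatch p s r) : ∃ a ∈ s, p a = true := by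
  induction h with
  | head ha => exact ⟨_, Seq.mem_cons _ _, ha⟩
  | tail _ _ ih =>
    obtain ⟨b, hb, hpb⟩ := ih
    exact ⟨b, Seq.mem_cons_of_mem _ hb, hpb⟩

theorem exists_firstMatch_of_mem (has : a ∈ s) (ha : p a = true) : ∃ r, FirstMatch p s r := by
  refine Seq.mem_rec_on (C := fun s => ∃ r, FirstMatch p s r) has fun b s' hb => ?_
  cases hpb : p b with
  | true => exact ⟨(b, s'), .head hpb⟩
  | false =>
    rcases hb with rfl | ⟨r, hr⟩
    · simp [ha] at hpb
    · exact ⟨r, .tail hpb hr⟩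

open Classical in
/-- The first match of `p` in `s`, or `none` if no element of `s` satisfies `p`. It is noncomputable
since the search for a match need not terminate on an infinite list. -/
noncomputable def firstMatch? (p : α → Bool) (s : Seq α) : Option (α × Seq α) :=
  if h : ∃ r, FirstMatch p s r then some h.choose else none

theorem firstMatch?_eq_some_iff : firstMatch? p s = some r ↔ FirstMatch p s r := by
  by_cases h : ∃ r, FirstMatch p s r
  · rw [firstMatch?, dif_pos h, Option.some_inj]
    exact ⟨fun hr => hr ▸ h.choose_spec, h.choose_spec.unique⟩
  · simp [firstMatch?, h, not_exists.1 h r]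

theorem firstMatch?_cons_of_true (ha : p a = true) :
    firstMatch? p (Seq.cons a s) = some (a, s) :=
  firstMatch?_eq_some_iff.2 (.head ha)

theorem firstMatch?_cons_of_false (ha : p a = false) :
    firstMatch? p (Seq.cons a s) = firstMatch? p s :=
  Option.ext fun _ => by
    rw [firstMatch?_eq_some_iff, firstMatch?_eq_some_iff, firstMatch_cons_of_false ha]

theorem firstMatch?_eq_none (h : ∀ a ∈ s, p a = false) : firstMatch? p s = none := by
  refine Option.eq_none_iff_forall_ne_some.2 fun r hr => ?_
  obtain ⟨a, has, ha⟩ := (firstMatch?_eq_some_iff.1 hr).exists_mem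
  simp [h a has] at ha

/-- The equations characterizing `f` as the filter of lazy lists by `p`. The two `cons` equations
alone do not determine `f` on an infinite list without matches; `eq_nil` settles that case. -/
structure IsSeqFilter (p : α → Bool) (f : Seq α → Seq α) : Prop where
  eq_nil {s : Seq α} : (∀ a ∈ s, p a = false) → f s = Seq.nil
  cons_of_true {a : α} {s : Seq α} : p a = true → f (Seq.cons a s) = Seq.cons a (f s)
  cons_of_false {a : α} {s : Seq α} : p a = false → f (Seq.cons a s) = f s

/-- The filter of lazy lists by `p`, emitting the first match and continuing after it. -/
noncomputable def seqFilter (p : α → Bool) : Seq α → Seq α :=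
  Seq.corec (firstMatch? p)

theorem isSeqFilter_seqFilter (p : α → Bool) : IsSeqFilter p (seqFilter p) where
  eq_nil h := Seq.corec_nil _ _ (firstMatch?_eq_none h)
  cons_of_true ha := Seq.corec_cons (firstMatch?_cons_of_true ha)
  cons_of_false ha := corec_eq_of_step_eq (firstMatch?_cons_of_false ha)

namespace IsSeqFilter

variable {f g : Seq α → Seq α}

theorem eq_cons_of_firstMatch (hf : IsSeqFilter p f) (h : FirstMatch p s r) :
    f s = Seq.cons r.1 (f r.2) := by
  induction h with
  | head ha => exact hf.cons_of_true ha
  | tail ha _ ih => rw [hf.cons_of_false ha, ih]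

theorem unique (hf : IsSeqFilter p f) (hg : IsSeqFilter p g) : f = g := by
  funext s
  refine Seq.eq_of_bisim' (fun u v => ∃ s, u = f s ∧ v = g s) ⟨s, rfl, rfl⟩ ?_
  rintro _ _ ⟨s, rfl, rfl⟩
  by_cases h : ∃ a ∈ s, p a = true
  · obtain ⟨a, has, ha⟩ := h
    obtain ⟨⟨x, t⟩, hxt⟩ := exists_firstMatch_of_mem has ha
    exact .inr ⟨x, f t, g t, hf.eq_cons_of_firstMatch hxt, hg.eq_cons_of_firstMatch hxt,
      t, rfl, rfl⟩
  · have hfalse : ∀ a ∈ s, p a = false := by simpa using h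
    exact .inl ⟨hf.eq_nil hfalse, hg.eq_nil hfalse⟩

end IsSeqFilter

end

theorem stmt_18_general (α : Type u) :
    ∃! f : (α → Bool) → Seq α → Seq α,
      ∀ (p : α → Bool) (s : Seq α),
        ((∀ a ∈ s, p a = false) → f p s = Seq.nil) ∧
        (∀ (a : α) (s' : Seq α), s = Seq.cons a s' →
          (p a = true → f p s = Seq.cons a (f p s')) ∧
          (p a = false → f p s = f p s')) := by
  refine ⟨seqFilter, fun p s => ⟨(isSeqFilter_seqFilter p).eq_nil, ?_⟩, fun f hf => ?_⟩
  · rintro a s' rfl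
    exact ⟨(isSeqFilter_seqFilter p).cons_of_true, (isSeqFilter_seqFilter p).cons_of_false⟩
  · funext p
    have hfp : IsSeqFilter p (f p) :=
      { eq_nil := (hf p _).1
        cons_of_true := ((hf p _).2 _ _ rfl).1
        cons_of_false := ((hf p _).2 _ _ rfl).2 }
    exact hfp.unique (isSeqFilter_seqFilter p)

theorem stmt_18 :
    ∃! f : (ℕ → Bool) → Stream'.Seq ℕ → Stream'.Seq ℕ,
      ∀ (p : ℕ → Bool) (s : Stream'.Seq ℕ),
        ((∀ a ∈ s, p a = false) → f p s = Stream'.Seq.nil) ∧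
        (∀ (a : ℕ) (s' : Stream'.Seq ℕ), s = Stream'.Seq.cons a s' →
          (p a = true → f p s = Stream'.Seq.cons a (f p s')) ∧
          (p a = false → f p s = f p s')) :=
  stmt_18_general ℕ
end
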